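/- (Decomposition of analz.) For every set G of messages, analz G = pparts G ∪ analz (kparts G). -/

import Mathlib

inductive agent : Type
  | Server : agent
  | Friend : ℕ → agent
  | Spy : agent
deriving DecidableEq

inductive msg : Type
  | Agent : agent → msg
  | Number : ℕ → msg
  | Nonce : ℕ → msg
  | Key : ℕ → msg
  | Hash : msg → msg
  | MPair : msg → msg → msg
  | Crypt : ℕ → msg → msg
deriving DecidableEq

inductive partsP (H : Set msg) : msg → Prop
  | Inj : ∀ X, X ∈ H → partsP H X
  | Fst : ∀ X Y, partsP H (msg.MPair X Y) → partsP H X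
  | Snd : ∀ X Y, partsP H (msg.MPair X Y) → partsP H Y
  | Body : ∀ K X, partsP H (msg.Crypt K X) → partsP H X

/-- `parts H`: sub-components of messages of `H`. -/
def parts (H : Set msg) : Set msg := {X | partsP H X}

inductive analzP (invKey : ℕ → ℕ) (H : Set msg) : msg → Prop
  | Inj : ∀ X, X ∈ H → analzP invKey H X
  | Fst : ∀ X Y, analzP invKey H (msg.MPair X Y) → analzP invKey H X
  | Snd : ∀ X Y, analzP invKey H (msg.MPair X Y) → analzP invKey H Y
  | Decrypt : ∀ K X, analzP invKey H (msg.Crypt K X) →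
      analzP invKey H (msg.Key (invKey K)) → analzP invKey H X

/-- `analz invKey H`: what can be obtained by decomposing and decrypting messages of `H`. -/
def analz (invKey : ℕ → ℕ) (H : Set msg) : Set msg := {X | analzP invKey H X}

inductive synthP (H : Set msg) : msg → Prop
  | Inj : ∀ X, X ∈ H → synthP H X
  | Ag : ∀ a, synthP H (msg.Agent a)
  | Num : ∀ n, synthP H (msg.Number n)
  | Hsh : ∀ X, synthP H X → synthP H (msg.Hash X)
  | Pr : ∀ X Y, synthP H X → synthP H Y → synthP H (msg.MPair X Y)
  | Cry : ∀ K X, synthP H X → msg.Key K ∈ H → synthP H (msg.Crypt K X)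

/-- `synth H`: messages that can be synthesized from `H`. -/
def synth (H : Set msg) : Set msg := {X | synthP H X}

inductive guardP (invKey : ℕ → ℕ) (n : ℕ) (Ks : Set ℕ) : msg → Prop
  | No_Nonce : ∀ X, msg.Nonce n ∉ parts {X} → guardP invKey n Ks X
  | Guard : ∀ K X, invKey K ∈ Ks → guardP invKey n Ks (msg.Crypt K X)
  | Cry : ∀ K X, guardP invKey n Ks X → guardP invKey n Ks (msg.Crypt K X)
  | Pr : ∀ X Y, guardP invKey n Ks X → guardP invKey n Ks Y →
      guardP invKey n Ks (msg.MPair X Y)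

/-- `guard n Ks`: messages in which `Nonce n` is guarded by the keys of `Ks`. -/
def guardMsg (invKey : ℕ → ℕ) (n : ℕ) (Ks : Set ℕ) : Set msg := {X | guardP invKey n Ks X}

/-- `Guard n Ks H`: every message of `H` lies in `guard n Ks`. -/
def Guard (invKey : ℕ → ℕ) (n : ℕ) (Ks : Set ℕ) (H : Set msg) : Prop :=
  ∀ X ∈ H, X ∈ guardMsg invKey n Ks

/-- A message is a pair if it is of the form `⟨X,Y⟩`. -/
def isPair : msg → Prop
  | msg.MPair _ _ => True
  | _ => False

inductive ppartsP (H : Set msg) : msg → Prop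
  | Inj : ∀ X Y, msg.MPair X Y ∈ H → ppartsP H (msg.MPair X Y)
  | Fst : ∀ X Y, ppartsP H (msg.MPair X Y) → isPair X → ppartsP H X
  | Snd : ∀ X Y, ppartsP H (msg.MPair X Y) → isPair Y → ppartsP H Y

/-- `pparts H`: the pairs of `H`, their components that are pairs, and so on. -/
def pparts (H : Set msg) : Set msg := {X | ppartsP H X}

/-- `kparts H`: the non-pair elements of `H` together with the non-pair
components of the pairs of `pparts H`. -/
def kparts (H : Set msg) : Set msg :=
  {X | ¬ isPair X ∧ (X ∈ H ∨ (∃ Y, msg.MPair X Y ∈ pparts H) ∨ (∃ Y, msg.MPair Y X ∈ pparts H))}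

theorem isPair_iff {X : msg} : isPair X ↔ ∃ Y Z, X = msg.MPair Y Z := by
  cases X <;> simp [isPair]

section PairParts

variable {H : Set msg} {X Y : msg}

theorem isPair_of_mem_pparts (h : X ∈ pparts H) : isPair X := by
  cases h with
  | Inj => trivial
  | Fst _ _ _ hX => exact hX
  | Snd _ _ _ hX => exact hX

theorem subset_pparts_union_kparts : H ⊆ pparts H ∪ kparts H := by
  intro X hX
  by_cases hpair : isPair X
  · obtain ⟨Y, Z, rfl⟩ := isPair_iff.mp hpair
    exact .inl (ppartsP.Inj Y Z hX)
  · exact .inr ⟨hpair, .inl hX⟩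

theorem fst_mem_pparts_union_kparts (h : msg.MPair X Y ∈ pparts H) :
    X ∈ pparts H ∪ kparts H := by
  by_cases hpair : isPair X
  · exact .inl (ppartsP.Fst X Y h hpair)
  · exact .inr ⟨hpair, .inr (.inl ⟨Y, h⟩)⟩

theorem snd_mem_pparts_union_kparts (h : msg.MPair X Y ∈ pparts H) :
    Y ∈ pparts H ∪ kparts H := by
  by_cases hpair : isPair Y
  · exact .inl (ppartsP.Snd X Y h hpair)
  · exact .inr ⟨hpair, .inr (.inr ⟨X, h⟩)⟩

end PairParts

section Analz

variable {invKey : ℕ → ℕ} {G H : Set msg}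

theorem subset_analz : H ⊆ analz invKey H :=
  analzP.Inj

theorem analz_subset_analz_of_subset (h : H ⊆ analz invKey G) :
    analz invKey H ⊆ analz invKey G := by
  intro X hX
  induction hX with
  | Inj X hX => exact h hX
  | Fst X Y _ ih => exact analzP.Fst X Y ih
  | Snd X Y _ ih => exact analzP.Snd X Y ih
  | Decrypt K X _ _ ihCrypt ihKey => exact analzP.Decrypt K X ihCrypt ihKey

theorem pparts_subset_analz : pparts H ⊆ analz invKey H := by
  intro X hX
  induction hX with
  | Inj X Y hXY => exact subset_analz hXY
  | Fst X Y _ _ ih => exact analzP.Fst X Y ih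
  | Snd X Y _ _ ih => exact analzP.Snd X Y ih

theorem kparts_subset_analz : kparts H ⊆ analz invKey H := by
  rintro X ⟨-, hX | ⟨Y, hXY⟩ | ⟨Y, hYX⟩⟩
  · exact subset_analz hX
  · exact analzP.Fst X Y (pparts_subset_analz hXY)
  · exact analzP.Snd Y X (pparts_subset_analz hYX)

/- Ciphertexts and keys are not pairs, so both premises of a decryption lie in
`analz invKey (kparts H)`; only projections can start from `pparts H`. -/
theorem analz_subset_pparts_union_analz_kparts :
    analz invKey H ⊆ pparts H ∪ analz invKey (kparts H) := by
  have lift : pparts H ∪ kparts H ⊆ pparts H ∪ analz invKey (kparts H) :=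
    Set.union_subset_union_right _ subset_analz
  intro X hX
  induction hX with
  | Inj X hX => exact lift (subset_pparts_union_kparts hX)
  | Fst X Y _ ih =>
    rcases ih with hpparts | hanalz
    · exact lift (fst_mem_pparts_union_kparts hpparts)
    · exact .inr (analzP.Fst X Y hanalz)
  | Snd X Y _ ih =>
    rcases ih with hpparts | hanalz
    · exact lift (snd_mem_pparts_union_kparts hpparts)
    · exact .inr (analzP.Snd X Y hanalz)
  | Decrypt K X _ _ ihCrypt ihKey =>
    have hCrypt : msg.Crypt K X ∈ analz invKey (kparts H) :=
      ihCrypt.resolve_left isPair_of_mem_pparts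
    have hKey : msg.Key (invKey K) ∈ analz invKey (kparts H) :=
      ihKey.resolve_left isPair_of_mem_pparts
    exact .inr (analzP.Decrypt K X hCrypt hKey)

end Analz

theorem analz_decomp_general (invKey : ℕ → ℕ) (G : Set msg) :
    analz invKey G = pparts G ∪ analz invKey (kparts G) :=
  analz_subset_pparts_union_analz_kparts.antisymm <|
    Set.union_subset pparts_subset_analz (analz_subset_analz_of_subset kparts_subset_analz)

/-- Decomposition of `analz`. -/
theorem analz_decomp (invKey : ℕ → ℕ) (hinv : ∀ K, invKey (invKey K) = K)
    (G : Set msg) :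
    analz invKey G = pparts G ∪ analz invKey (kparts G) :=
  analz_decomp_general invKey G
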